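/- arXiv:2009.07073 — 3 statements merged into one kernel-verified Lean document; each statement's English description precedes it below -/
import Mathlib

section
/- Let G be a finite simple graph. A set B ⊆ V(G) is a 1-edge-leaky forcing set if and only if for every vertex v ∈ V(G) \ B there exist two distinct vertices x ≠ y with x→v ∈ ℱ(B) and y→v ∈ ℱ(B). -/
/-!
Zero forcing with leaks (vertex leaks, edge leaks, specified leaks, mixed leaks).

A force `u → v` is modelled as the ordered pair `(u, v) : V × V`.  All the
leak notions are encoded by a set `P` of *prohibited* forces.
-/

variable {V : Type*}

/-- With blue set `S` and prohibited set of forces `P`, vertex `u` can force `v`: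
`u` is blue, `v` is a white neighbor of `u`, every other neighbor of `u` is blue,
and the force `u → v` is not prohibited. -/
def CanForce (G : SimpleGraph V) (P : Set (V × V)) (S : Set V) (u v : V) : Prop :=
  u ∈ S ∧ v ∉ S ∧ G.Adj u v ∧ (∀ w, G.Adj u w → w ≠ v → w ∈ S) ∧ (u, v) ∉ P

/-- `Forced G P B v` means vertex `v` is eventually colored blue when the zero
forcing color change rule (avoiding the prohibited forces `P`) is applied
exhaustively starting from the blue set `B`. -/
inductive Forced (G : SimpleGraph V) (P : Set (V × V)) (B : Set V) : V → Prop
  | init : ∀ {v : V}, v ∈ B → Forced G P B v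
  | force : ∀ {u v : V}, G.Adj u v → (u, v) ∉ P → Forced G P B u →
      (∀ w, G.Adj u w → w ≠ v → Forced G P B w) → Forced G P B v

/-- `B^[∞]_P`, the set of blue vertices after exhaustively applying the zero
forcing rule with prohibited forces `P`, starting from `B`. -/
def closureSet (G : SimpleGraph V) (P : Set (V × V)) (B : Set V) : Set V :=
  {v | Forced G P B v}

/-- The prohibited forces corresponding to a set `L` of vertex leaks: a vertex
leak may not perform any force. -/
def vertexLeaks (L : Set V) : Set (V × V) := {p | p.1 ∈ L}

/-- The prohibited forces corresponding to a set `L` of edge leaks: no force may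
pass across an edge leak in either direction. -/
def edgeLeaksP (L : Set (Sym2 V)) : Set (V × V) := {p | s(p.1, p.2) ∈ L}

/-- `B` is an `ℓ`-leaky forcing set of `G`: despite any set of (at most) `ℓ`
vertex leaks, exhaustive forcing colors all of `V(G)` blue. -/
def IsLeakyForcingSet (G : SimpleGraph V) (ℓ : ℕ) (B : Set V) : Prop :=
  ∀ L : Finset V, L.card ≤ ℓ → closureSet G (vertexLeaks ↑L) B = Set.univ

/-- `B` is an `ℓ`-edge-leaky forcing set of `G`: despite any set of (at most)
`ℓ` edge leaks, exhaustive forcing colors all of `V(G)` blue. -/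
def IsEdgeLeakyForcingSet (G : SimpleGraph V) (ℓ : ℕ) (B : Set V) : Prop :=
  ∀ L : Finset (Sym2 V), ↑L ⊆ G.edgeSet → L.card ≤ ℓ →
    closureSet G (edgeLeaksP ↑L) B = Set.univ

/-- `B` is a specified `ℓ`-leaky forcing set of `G`: despite any set of (at
most) `ℓ` specified leaks (prohibited forces between adjacent vertices),
exhaustive forcing colors all of `V(G)` blue. -/
def IsSpecifiedLeakyForcingSet (G : SimpleGraph V) (ℓ : ℕ) (B : Set V) : Prop :=
  ∀ L : Finset (V × V), (∀ p ∈ L, G.Adj p.1 p.2) → L.card ≤ ℓ →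
    closureSet G (↑L) B = Set.univ

/-- `B` is a mixed `ℓ`-leaky forcing set of `G`: despite any set of (at most)
`ℓ` leaks, each a vertex leak, an edge leak, or a specified leak, exhaustive
forcing colors all of `V(G)` blue. -/
def IsMixedLeakyForcingSet (G : SimpleGraph V) (ℓ : ℕ) (B : Set V) : Prop :=
  ∀ (L₁ : Finset V) (L₂ : Finset (Sym2 V)) (L₃ : Finset (V × V)),
    ↑L₂ ⊆ G.edgeSet → (∀ p ∈ L₃, G.Adj p.1 p.2) →
    L₁.card + L₂.card + L₃.card ≤ ℓ →
    closureSet G (vertexLeaks ↑L₁ ∪ edgeLeaksP ↑L₂ ∪ (↑L₃ : Set (V × V))) B = Set.univ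

/-- A chronologically valid list of forces starting from a blue set. -/
def ValidList (G : SimpleGraph V) (P : Set (V × V)) : Set V → List (V × V) → Prop
  | _, [] => True
  | S, f :: l => CanForce G P S f.1 f.2 ∧ ValidList G P (insert f.2 S) l

/-- `F` is a forcing process (set of forces) of `B` in `G` with prohibited
forces `P`: the forces of `F` admit a chronological ordering in which each force
is valid and after applying all of them the whole graph is blue. -/
def IsForcingProcess (G : SimpleGraph V) (P : Set (V × V)) (B : Set V)
    (F : Set (V × V)) : Prop :=
  ∃ l : List (V × V), {f | f ∈ l} = F ∧ ValidList G P B l ∧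
    B ∪ Prod.snd '' F = Set.univ

/-- `B'` is obtained from `B` using `F`: `B` can color exactly `B'` blue using
only a subset of the forces in `F`, applied in a chronologically valid order. -/
def ObtainedUsing (G : SimpleGraph V) (P : Set (V × V)) (B : Set V) (F : Set (V × V))
    (B' : Set V) : Prop :=
  ∃ l : List (V × V), (∀ f ∈ l, f ∈ F) ∧ ValidList G P B l ∧
    B' = B ∪ Prod.snd '' {f | f ∈ l}

/-- `ℱ_P(B)`: the set of forces that belong to some forcing process of `B`
(with prohibited forces `P`). -/
def potentialForces (G : SimpleGraph V) (P : Set (V × V)) (B : Set V) : Set (V × V) :=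
  {f | ∃ F, IsForcingProcess G P B F ∧ f ∈ F}

/-- `Z_(ℓ)(G)`, the `ℓ`-leaky forcing number of `G`. -/
noncomputable def Zleaky (G : SimpleGraph V) (ℓ : ℕ) : ℕ :=
  sInf {n | ∃ B : Finset V, B.card = n ∧ IsLeakyForcingSet G ℓ ↑B}

/-- `Z'_(ℓ)(G)`, the `ℓ`-edge-leaky forcing number of `G`. -/
noncomputable def ZedgeLeaky (G : SimpleGraph V) (ℓ : ℕ) : ℕ :=
  sInf {n | ∃ B : Finset V, B.card = n ∧ IsEdgeLeakyForcingSet G ℓ ↑B}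

/-- `Z^s_(ℓ)(G)`, the specified `ℓ`-leaky forcing number of `G`. -/
noncomputable def Zspec (G : SimpleGraph V) (ℓ : ℕ) : ℕ :=
  sInf {n | ∃ B : Finset V, B.card = n ∧ IsSpecifiedLeakyForcingSet G ℓ ↑B}

/-- `Z^m_(ℓ)(G)`, the mixed `ℓ`-leaky forcing number of `G`. -/
noncomputable def Zmixed (G : SimpleGraph V) (ℓ : ℕ) : ℕ :=
  sInf {n | ∃ B : Finset V, B.card = n ∧ IsMixedLeakyForcingSet G ℓ ↑B}

/-- Two sets of specified leaks on `V(G)` are isomorphic if some bijection of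
the vertex set matches them up. -/
def LeaksIso (L₁ L₂ : Set (V × V)) : Prop :=
  ∃ φ : V ≃ V, ∀ x y : V, (x, y) ∈ L₁ ↔ (φ x, φ y) ∈ L₂

/-- `B` is an `L`-leaky forcing set of `G`: `B` colors all of `V(G)` blue
despite any set of specified leaks isomorphic to a subset of `L`. -/
def IsLLeakyForcingSet (G : SimpleGraph V) (L : Set (V × V)) (B : Set V) : Prop :=
  ∀ L' : Set (V × V), (∃ L₂ ⊆ L, LeaksIso L' L₂) → closureSet G L' B = Set.univ

/-- `L` is a set of independent leaks: `|T(L)| = |L|` and `T(L) ∩ H(L) = ∅`. -/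
def IsIndependentLeaks [DecidableEq V] (L : Finset (V × V)) : Prop :=
  (L.image Prod.fst).card = L.card ∧ Disjoint (L.image Prod.fst) (L.image Prod.snd)

/-- `I(L)`: the size of a largest set of independent leaks contained in `L`. -/
noncomputable def maxIndepLeaks [DecidableEq V] (L : Finset (V × V)) : ℕ :=
  sSup {n | ∃ M ⊆ L, IsIndependentLeaks M ∧ M.card = n}

/-- `Z_L(G)`, the `L`-leaky forcing number of `G`. -/
noncomputable def ZLleaky (G : SimpleGraph V) (L : Set (V × V)) : ℕ :=
  sInf {n | ∃ B : Finset V, B.card = n ∧ IsLLeakyForcingSet G L ↑B}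

/-!
A white vertex is forced by some `x` when there are no leaks, and by some `y` when the edge `xv` is
leaked; the leak makes `x ≠ y`.

Conversely, let `C ⊇ B` be a set of vertices that misses some vertex. In any forcing process of `B`
the first force leaving `C` is already valid from `C`. Take such a force `a → b`, and a process in
which some `z ≠ a` forces `b`. The first force of this process leaving `C` is not `a → b`, because
`b` is forced only once. So two distinct forces are valid from `C`. They cross distinct edges, as
both start in `C` and end outside it, and one leaked edge cannot block them both. Hence the vertices
blue after exhaustive forcing cannot form such a set `C`.
-/

section Forcing

variable {G : SimpleGraph V} {P Q : Set (V × V)} {B C S T : Set V} {u v : V}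

theorem CanForce.notMem (h : CanForce G P S u v) : v ∉ S := h.2.1

theorem CanForce.adj (h : CanForce G P S u v) : G.Adj u v := h.2.2.1

theorem CanForce.notMem_prohibited (h : CanForce G P S u v) : (u, v) ∉ P := h.2.2.2.2

theorem CanForce.mono (h : CanForce G P S u v) (hST : S ⊆ T) (hv : v ∉ T) (hQ : (u, v) ∉ Q) :
    CanForce G Q T u v :=
  have ⟨hu, _, hadj, hnbr, _⟩ := h
  ⟨hST hu, hv, hadj, fun w huw hwv => hST (hnbr w huw hwv), hQ⟩

/-- A set of blue vertices is stalled if the color change rule, avoiding the prohibited forces `P`,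
allows no further force. -/
def IsStalled (G : SimpleGraph V) (P : Set (V × V)) (S : Set V) : Prop :=
  ∀ u v, ¬ CanForce G P S u v

theorem subset_closureSet : B ⊆ closureSet G P B :=
  fun _ => Forced.init

theorem isStalled_closureSet : IsStalled G P (closureSet G P B) :=
  fun _ _ ⟨hu, hv, hadj, hnbr, hP⟩ => hv (Forced.force hadj hP hu hnbr)

theorem IsStalled.closureSet_subset (hC : IsStalled G P C) (hBC : B ⊆ C) :
    closureSet G P B ⊆ C := by
  intro v hv
  induction hv with
  | init hv => exact hBC hv
  | force hadj hP _ _ hu hnbr => exact by_contra fun hv => hC _ _ ⟨hu, hv, hadj, hnbr, hP⟩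

theorem IsStalled.closureSet_eq (hB : IsStalled G P B) : closureSet G P B = B :=
  (hB.closureSet_subset subset_rfl).antisymm subset_closureSet

theorem closureSet_insert (hv : v ∈ closureSet G P B) :
    closureSet G P (insert v B) = closureSet G P B :=
  (isStalled_closureSet.closureSet_subset (Set.insert_subset hv subset_closureSet)).antisymm
    (isStalled_closureSet.closureSet_subset ((Set.subset_insert v B).trans subset_closureSet))

theorem CanForce.mem_closureSet (h : CanForce G P B u v) : v ∈ closureSet G P B :=
  by_contra fun hv => isStalled_closureSet u v (h.mono subset_closureSet hv h.notMem_prohibited)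

theorem ValidList.exists_superset_canForce {l : List (V × V)} {f : V × V}
    (hl : ValidList G P S l) (hf : f ∈ l) : ∃ T, S ⊆ T ∧ CanForce G P T f.1 f.2 := by
  induction l generalizing S with
  | nil => cases hf
  | cons g l ih =>
    rcases List.mem_cons.1 hf with rfl | hf
    · exact ⟨S, subset_rfl, hl.1⟩
    · obtain ⟨T, hST, hT⟩ := ih hl.2 hf
      exact ⟨T, (Set.subset_insert _ _).trans hST, hT⟩

theorem ValidList.nodup_map_snd {l : List (V × V)} (hl : ValidList G P S l) :
    (l.map Prod.snd).Nodup := by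
  induction l generalizing S with
  | nil => exact List.nodup_nil
  | cons f l ih =>
    refine List.nodup_cons.2 ⟨fun hf => ?_, ih hl.2⟩
    obtain ⟨g, hg, hgf⟩ := List.mem_map.1 hf
    obtain ⟨T, hT, hgT⟩ := hl.2.exists_superset_canForce hg
    exact hgT.notMem (hgf ▸ hT (Set.mem_insert _ _))

theorem ValidList.anti {l : List (V × V)} (hl : ValidList G P S l) (hQP : Q ⊆ P) :
    ValidList G Q S l := by
  induction l generalizing S with
  | nil => trivial
  | cons f l ih =>
    exact ⟨hl.1.mono subset_rfl hl.1.notMem fun hf => hl.1.notMem_prohibited (hQP hf), ih hl.2⟩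

theorem ValidList.exists_canForce_of_notMem {l : List (V × V)} {g : V × V}
    (hl : ValidList G P S l) (hSC : S ⊆ C) (hg : g ∈ l) (hgC : g.2 ∉ C) :
    ∃ f ∈ l, CanForce G P C f.1 f.2 := by
  induction l generalizing S with
  | nil => cases hg
  | cons f l ih =>
    by_cases hfC : f.2 ∈ C
    · have hgl : g ∈ l := (List.mem_cons.1 hg).resolve_left fun h => hgC (h ▸ hfC)
      obtain ⟨k, hk, hkC⟩ := ih hl.2 (Set.insert_subset hfC hSC) hgl
      exact ⟨k, List.mem_cons_of_mem f hk, hkC⟩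
    · exact ⟨f, List.mem_cons_self, hl.1.mono hSC hfC hl.1.notMem_prohibited⟩

theorem exists_validList_eq_closureSet (hfin : (closureSet G P B \ B).Finite) :
    ∃ l, ValidList G P B l ∧ B ∪ Prod.snd '' {f | f ∈ l} = closureSet G P B := by
  induction hn : (closureSet G P B \ B).ncard using Nat.strong_induction_on generalizing B with
  | _ n ih =>
    by_cases hB : IsStalled G P B
    · exact ⟨[], trivial, by simp [hB.closureSet_eq]⟩
    · obtain ⟨u, v, huv⟩ : ∃ u v, CanForce G P B u v := by simpa [IsStalled] using hB
      have hcl : closureSet G P (insert v B) = closureSet G P B :=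
        closureSet_insert huv.mem_closureSet
      have hssub : closureSet G P (insert v B) \ insert v B ⊂ closureSet G P B \ B := by
        rw [hcl]
        exact ⟨Set.sdiff_subset_sdiff_right (Set.subset_insert v B),
          fun h => (h ⟨huv.mem_closureSet, huv.notMem⟩).2 (Set.mem_insert v B)⟩
      obtain ⟨l, hl, hcov⟩ :=
        ih _ (hn ▸ Set.ncard_lt_ncard hssub hfin) (hfin.subset hssub.subset) rfl
      refine ⟨(u, v) :: l, ⟨huv, hl⟩, ?_⟩
      have hheads : Prod.snd '' {f | f ∈ (u, v) :: l} = insert v (Prod.snd '' {f | f ∈ l}) := by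
        simp only [List.mem_cons, Set.ofPred_or, Set.ofPred_eq_eq_singleton, Set.singleton_union,
          Set.image_insert_eq]
      rw [hheads, Set.union_insert, ← Set.insert_union, hcov, hcl]

theorem exists_isForcingProcess (hB : Bᶜ.Finite) (hcl : closureSet G P B = Set.univ) :
    ∃ F, IsForcingProcess G P B F := by
  have hfin : (closureSet G P B \ B).Finite := hB.subset fun _ hv => hv.2
  obtain ⟨l, hl, hcov⟩ := exists_validList_eq_closureSet hfin
  exact ⟨_, l, rfl, hl, hcov.trans hcl⟩

theorem IsForcingProcess.exists_mem {F : Set (V × V)} (hF : IsForcingProcess G P B F)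
    (hv : v ∉ B) : ∃ u, (u, v) ∈ F := by
  obtain ⟨l, -, -, hcov⟩ := hF
  have hvF : v ∈ B ∪ Prod.snd '' F := hcov ▸ Set.mem_univ v
  simpa [hv] using hvF

theorem IsForcingProcess.fst_unique {F : Set (V × V)} {x y : V} (hF : IsForcingProcess G P B F)
    (hx : (x, v) ∈ F) (hy : (y, v) ∈ F) : x = y := by
  obtain ⟨l, rfl, hl, -⟩ := hF
  exact congrArg Prod.fst (List.inj_on_of_nodup_map hl.nodup_map_snd hx hy rfl)

theorem IsForcingProcess.exists_mem_canForce {F : Set (V × V)} (hF : IsForcingProcess G P B F)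
    (hBC : B ⊆ C) (hC : C ≠ Set.univ) : ∃ f ∈ F, CanForce G P C f.1 f.2 := by
  obtain ⟨v, hv⟩ := (Set.ne_univ_iff_exists_notMem C).1 hC
  obtain ⟨u, hu⟩ := hF.exists_mem fun hvB => hv (hBC hvB)
  obtain ⟨l, rfl, hl, -⟩ := hF
  exact hl.exists_canForce_of_notMem hBC hu hv

theorem exists_mem_potentialForces (hB : Bᶜ.Finite) (hcl : closureSet G P B = Set.univ)
    (hv : v ∉ B) : ∃ u, (u, v) ∈ potentialForces G P B := by
  obtain ⟨F, hF⟩ := exists_isForcingProcess hB hcl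
  obtain ⟨u, hu⟩ := hF.exists_mem hv
  exact ⟨u, F, hF, hu⟩

theorem potentialForces_anti (hQP : Q ⊆ P) : potentialForces G P B ⊆ potentialForces G Q B :=
  fun _ ⟨F, ⟨l, hlF, hl, hcov⟩, hf⟩ => ⟨F, ⟨l, hlF, hl.anti hQP, hcov⟩, hf⟩

theorem exists_canForce_of_mem_potentialForces {f : V × V} (hf : f ∈ potentialForces G P B) :
    ∃ T, B ⊆ T ∧ CanForce G P T f.1 f.2 := by
  obtain ⟨_, ⟨l, rfl, hl, -⟩, hfl⟩ := hf
  exact hl.exists_superset_canForce hfl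

theorem adj_of_mem_potentialForces (h : (u, v) ∈ potentialForces G P B) : G.Adj u v :=
  have ⟨_, _, huv⟩ := exists_canForce_of_mem_potentialForces h
  huv.adj

theorem notMem_of_mem_potentialForces {f : V × V} (h : f ∈ potentialForces G P B) : f ∉ P :=
  have ⟨_, _, hf⟩ := exists_canForce_of_mem_potentialForces h
  hf.notMem_prohibited

theorem exists_ne_canForce_of_ne_univ
    (h : ∀ v, v ∉ B → ∃ x y, x ≠ y ∧ (x, v) ∈ potentialForces G P B ∧
      (y, v) ∈ potentialForces G P B)
    (hBC : B ⊆ C) (hC : C ≠ Set.univ) :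
    ∃ f g : V × V, f ≠ g ∧ CanForce G P C f.1 f.2 ∧ CanForce G P C g.1 g.2 := by
  obtain ⟨v, hv⟩ := (Set.ne_univ_iff_exists_notMem C).1 hC
  obtain ⟨-, -, -, ⟨F, hF, -⟩, -⟩ := h v fun hvB => hv (hBC hvB)
  obtain ⟨⟨a, b⟩, -, hab⟩ := hF.exists_mem_canForce hBC hC
  obtain ⟨z, hza, F', hF', hzb⟩ : ∃ z ≠ a, (z, b) ∈ potentialForces G P B := by
    obtain ⟨x, y, hxy, hx, hy⟩ := h b fun hb => hab.notMem (hBC hb)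
    rcases eq_or_ne x a with rfl | hxa
    · exact ⟨y, hxy.symm, hy⟩
    · exact ⟨x, hxa, hx⟩
  obtain ⟨g, hgF', hg⟩ := hF'.exists_mem_canForce hBC hC
  refine ⟨(a, b), g, ?_, hab, hg⟩
  rintro rfl
  exact hza (hF'.fst_unique hzb hgF')

theorem CanForce.eq_of_sym2_eq {f g : V × V} (hf : CanForce G P S f.1 f.2)
    (hg : CanForce G Q S g.1 g.2) (h : s(f.1, f.2) = s(g.1, g.2)) : f = g := by
  rcases Sym2.mk_eq_mk_iff.1 h with h | h
  · exact h
  · exact absurd hf.1 (congrArg Prod.fst h ▸ hg.notMem)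

theorem IsEdgeLeakyForcingSet.exists_ne_mem_potentialForces (hB : Bᶜ.Finite)
    (h : IsEdgeLeakyForcingSet G 1 B) (hv : v ∉ B) :
    ∃ x y, x ≠ y ∧ (x, v) ∈ potentialForces G ∅ B ∧ (y, v) ∈ potentialForces G ∅ B := by
  have hno_leak : closureSet G ∅ B = Set.univ := by
    simpa [edgeLeaksP] using h ∅ (by simp) (by simp)
  obtain ⟨x, hx⟩ := exists_mem_potentialForces hB hno_leak hv
  have hleak := h {s(x, v)} (by simpa using adj_of_mem_potentialForces hx) (by simp)
  obtain ⟨y, hy⟩ := exists_mem_potentialForces hB hleak hv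
  refine ⟨x, y, ?_, hx, potentialForces_anti (Set.empty_subset _) hy⟩
  rintro rfl
  exact notMem_of_mem_potentialForces hy (by simp [edgeLeaksP])

theorem isEdgeLeakyForcingSet_one_of_potentialForces
    (h : ∀ v, v ∉ B → ∃ x y, x ≠ y ∧ (x, v) ∈ potentialForces G ∅ B ∧
      (y, v) ∈ potentialForces G ∅ B) :
    IsEdgeLeakyForcingSet G 1 B := by
  intro L _ hL
  by_contra hC
  obtain ⟨f, g, hfg, hf, hg⟩ := exists_ne_canForce_of_ne_univ h subset_closureSet hC
  have leaked {k : V × V} (hk : CanForce G ∅ (closureSet G (edgeLeaksP L) B) k.1 k.2) :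
      s(k.1, k.2) ∈ L :=
    by_contra fun hkL => isStalled_closureSet k.1 k.2 (hk.mono subset_rfl hk.notMem hkL)
  exact hfg (hf.eq_of_sym2_eq hg (Finset.card_le_one.1 hL _ (leaked hf) _ (leaked hg)))

end Forcing

theorem statement3_general (G : SimpleGraph V) (B : Set V) (hB : Bᶜ.Finite) :
    IsEdgeLeakyForcingSet G 1 B ↔
      ∀ v : V, v ∉ B →
        ∃ x y : V, x ≠ y ∧ (x, v) ∈ potentialForces G ∅ B ∧
          (y, v) ∈ potentialForces G ∅ B :=
  ⟨fun h _ hv => h.exists_ne_mem_potentialForces hB hv,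
    isEdgeLeakyForcingSet_one_of_potentialForces⟩

/-- Theorem `edgedouble`: `B` is a `1`-edge-leaky forcing set
iff every `v ∈ V(G) \ B` admits two distinct forces `x→v, y→v ∈ ℱ(B)`. -/
theorem statement3 [Fintype V] [DecidableEq V] (G : SimpleGraph V) (B : Set V) :
    IsEdgeLeakyForcingSet G 1 B ↔
      ∀ v : V, v ∉ B →
        ∃ x y : V, x ≠ y ∧ (x, v) ∈ potentialForces G ∅ B ∧
          (y, v) ∈ potentialForces G ∅ B :=
  statement3_general G B Bᶜ.toFinite
end

section
/- For any finite simple graph G and any ℓ ≥ 0, Z^s_(ℓ)(G) = Z_(ℓ)(G); moreover, a set B ⊆ V(G) is an ℓ-leaky forcing set if and only if B is a specified ℓ-leaky forcing set. -/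
/-!
Zero forcing with leaks (vertex leaks, edge leaks, specified leaks, mixed leaks).

A force `u → v` is modelled as the ordered pair `(u, v) : V × V`.  All the
leak notions are encoded by a set `P` of *prohibited* forces.
-/

variable {V : Type*}

/-!
A specified leak `u → v` is harmless compared with the vertex leak `u`, so leaky forcing sets are
specified leaky. Conversely, run the forcing process against a set of vertex leaks until it stops.
The only leaks that matter are then the forces which the color change rule alone would still
allow. A vertex can perform at most one such force, so there are at most as many of them as vertex
leaks; and prohibiting just these specified forces already confines the process to the same
vertices.
-/

section Forces

variable {G : SimpleGraph V} {P Q : Set (V × V)} {B S : Set V} {u v w : V}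

theorem Forced.anti (hPQ : P ⊆ Q) (hv : Forced G Q B v) : Forced G P B v := by
  induction hv with
  | init hB => exact .init hB
  | force hadj hQ _ _ ihu ihw => exact .force hadj (fun hP => hQ (hPQ hP)) ihu ihw

theorem closureSet_anti (hPQ : P ⊆ Q) : closureSet G Q B ⊆ closureSet G P B :=
  fun _ hv => Forced.anti hPQ hv

theorem CanForce.target_unique (hv : CanForce G P S u v) (hw : CanForce G Q S u w) : v = w := by
  obtain ⟨-, -, -, hothers, -⟩ := hv
  obtain ⟨-, hwS, hadj, -, -⟩ := hw
  by_contra hne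
  exact hwS (hothers w hadj (Ne.symm hne))

theorem CanForce.mem_prohibited (h : CanForce G Q (closureSet G P B) u v) : (u, v) ∈ P := by
  obtain ⟨hu, hv, hadj, hothers, -⟩ := h
  by_contra hP
  exact hv (.force hadj hP hu hothers)

variable (G P B) in
/-- The stalled forces of `B` under the prohibited forces `P`: the forces that the color change
rule without any prohibition would allow next, once forcing under `P` has been exhausted. -/
def stalledForces : Set (V × V) :=
  {p | CanForce G ∅ (closureSet G P B) p.1 p.2}

theorem stalledForces_subset : stalledForces G P B ⊆ P :=
  fun _ hp => CanForce.mem_prohibited hp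

theorem injOn_fst_stalledForces : Set.InjOn Prod.fst (stalledForces G P B) := by
  rintro ⟨u, v⟩ hv ⟨_, w⟩ hw rfl
  exact congrArg (Prod.mk u) (CanForce.target_unique hv hw)

theorem closureSet_stalledForces :
    closureSet G (stalledForces G P B) B = closureSet G P B := by
  refine Set.Subset.antisymm (fun v hv => ?_) (closureSet_anti stalledForces_subset)
  induction hv with
  | init hB => exact .init hB
  | @force u v hadj hnotStalled _ _ hu hothers =>
    by_contra hv
    exact hnotStalled ⟨hu, hv, hadj, hothers, Set.notMem_empty _⟩

theorem subset_vertexLeaks_image_fst : P ⊆ vertexLeaks (Prod.fst '' P) :=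
  fun _ hp => Set.mem_image_of_mem _ hp

end Forces

section Leaky

variable {G : SimpleGraph V} {ℓ : ℕ} {B : Set V}

theorem exists_specifiedLeaks_closureSet_eq (G : SimpleGraph V) (B : Set V) (T : Finset V) :
    ∃ L : Finset (V × V), (∀ p ∈ L, G.Adj p.1 p.2) ∧ L.card ≤ T.card ∧
      closureSet G ↑L B = closureSet G (vertexLeaks ↑T) B := by
  have hmaps : Set.MapsTo Prod.fst (stalledForces G (vertexLeaks ↑T) B) (T : Set V) :=
    stalledForces_subset
  have hfin : (stalledForces G (vertexLeaks ↑T) B).Finite :=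
    .of_injOn hmaps injOn_fst_stalledForces T.finite_toSet
  lift stalledForces G (vertexLeaks ↑T) B to Finset (V × V) using hfin with L hL
  refine ⟨L, fun p hp => ?_, ?_, ?_⟩
  · have hstalled : p ∈ stalledForces G (vertexLeaks ↑T) B := hL ▸ hp
    exact hstalled.2.2.1
  · exact Finset.card_le_card_of_injOn Prod.fst hmaps (hL ▸ injOn_fst_stalledForces)
  · rw [hL, closureSet_stalledForces]

theorem IsLeakyForcingSet.isSpecifiedLeakyForcingSet (hB : IsLeakyForcingSet G ℓ B) :
    IsSpecifiedLeakyForcingSet G ℓ B := by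
  classical
  intro L _ hcard
  have htails := hB (L.image Prod.fst) (Finset.card_image_le.trans hcard)
  rw [Finset.coe_image] at htails
  exact Set.univ_subset_iff.mp (htails ▸ closureSet_anti subset_vertexLeaks_image_fst)

theorem IsSpecifiedLeakyForcingSet.isLeakyForcingSet (hB : IsSpecifiedLeakyForcingSet G ℓ B) :
    IsLeakyForcingSet G ℓ B := by
  intro T hT
  obtain ⟨L, hadj, hcard, hclosure⟩ := exists_specifiedLeaks_closureSet_eq G B T
  exact hclosure ▸ hB L hadj (hcard.trans hT)

theorem isLeakyForcingSet_iff_isSpecifiedLeakyForcingSet :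
    IsLeakyForcingSet G ℓ B ↔ IsSpecifiedLeakyForcingSet G ℓ B :=
  ⟨IsLeakyForcingSet.isSpecifiedLeakyForcingSet, IsSpecifiedLeakyForcingSet.isLeakyForcingSet⟩

end Leaky

/-- On an infinite graph without finite leaky forcing sets, both numbers are the junk value
`sInf ∅ = 0`. -/
theorem statement8_general (G : SimpleGraph V) (ℓ : ℕ) :
    Zspec G ℓ = Zleaky G ℓ ∧
      ∀ B : Set V, IsLeakyForcingSet G ℓ B ↔ IsSpecifiedLeakyForcingSet G ℓ B := by
  refine ⟨?_, fun B => isLeakyForcingSet_iff_isSpecifiedLeakyForcingSet⟩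
  simp only [Zspec, Zleaky, isLeakyForcingSet_iff_isSpecifiedLeakyForcingSet]

/-- Corollary `specfund`: `Z^s_(ℓ)(G) = Z_(ℓ)(G)`, and `B` is
an `ℓ`-leaky forcing set iff `B` is a specified `ℓ`-leaky forcing set. -/
theorem statement8 [Fintype V] [DecidableEq V] (G : SimpleGraph V) (ℓ : ℕ) :
    Zspec G ℓ = Zleaky G ℓ ∧
      ∀ B : Set V, IsLeakyForcingSet G ℓ B ↔ IsSpecifiedLeakyForcingSet G ℓ B :=
  statement8_general G ℓ
end

section
/- Let G be a finite simple graph, ℓ ≥ 1, and let B be a mixed (ℓ−1)-leaky forcing set of G. Let L = L₁ ∪ L₂ ∪ L₃ be a set of k ≥ ℓ leaks, where L₁ is a set of vertex leaks, L₂ a set of edge leaks, and L₃ a set of specified leaks. Then |L₁ \ B^[∞]_L| + |L₂ − B^[∞]_L| + |L₃ − B^[∞]_L| ≤ k − ℓ, where for S ⊆ V(G), L₂ − S = {xy ∈ L₂ : x ∉ S and y ∉ S} and L₃ − S = {x→y ∈ L₃ : x ∉ S}. -/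
/-!
Zero forcing with leaks (vertex leaks, edge leaks, specified leaks, mixed leaks).

A force `u → v` is modelled as the ordered pair `(u, v) : V × V`.  All the
leak notions are encoded by a set `P` of *prohibited* forces.
-/

variable {V : Type*}

/-!
Let `C` be the set that `B` colors blue despite the leaks `L`. A leak that would only stop forces
by vertices outside `C` never comes into play, so the remaining, active leaks confine `B` to `C`
just as `L` does. If `B` withstands any `m` leaks and at most `m` leaks were active, then `C` would
be all of `V(G)`, which makes every leak active. Hence as soon as `L` has more than `m` leaks, more
than `m` of them are active.
-/

theorem ncard_sep_not_add_card_filter {α : Type*} (s : Finset α) (p : α → Prop)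
    [DecidablePred p] : {a ∈ (s : Set α) | ¬ p a}.ncard + (s.filter p).card = s.card := by
  have hcoe : {a ∈ (s : Set α) | ¬ p a} = ↑(s.filter (¬ p ·)) := (Finset.coe_filter ..).symm
  rw [hcoe, Set.ncard_coe_finset, add_comm, Finset.card_filter_add_card_filter_not]

section

variable {G : SimpleGraph V} {B : Set V} {m : ℕ}

theorem closureSet_subset_closureSet {P Q : Set (V × V)}
    (hPQ : ∀ p ∈ P, p.1 ∈ closureSet G P B → p ∈ Q) :
    closureSet G Q B ⊆ closureSet G P B := by
  intro v hv
  induction hv with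
  | init hvB => exact Forced.init hvB
  | force hadj hnotQ _ _ hu hothers =>
    exact Forced.force hadj (fun hP => hnotQ (hPQ _ hP hu)) hu hothers

/-- A finite family of leaks of `G`: vertex leaks, edge leaks on edges of `G`, and specified leaks
`u → v`, given as pairs `(u, v)` of adjacent vertices. -/
structure MixedLeaks (G : SimpleGraph V) where
  vertices : Finset V
  edges : Finset (Sym2 V)
  specified : Finset (V × V)
  edges_subset : ↑edges ⊆ G.edgeSet
  adj_of_mem_specified : ∀ p ∈ specified, G.Adj p.1 p.2

namespace MixedLeaks

/-- The number of leaks, counted with their kind: a vertex leak, an edge leak and a specified leak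
are distinct even if they prohibit a common force. -/
def card (L : MixedLeaks G) : ℕ := L.vertices.card + L.edges.card + L.specified.card

/-- The forces prohibited by at least one of the leaks of `L`. -/
def prohibitedForces (L : MixedLeaks G) : Set (V × V) :=
  vertexLeaks ↑L.vertices ∪ edgeLeaksP ↑L.edges ∪ ↑L.specified

open scoped Classical in
/-- The leaks of `L` that prohibit a force by some vertex of `S`; an edge leak is active as soon as
one of its endpoints lies in `S`. -/
noncomputable def active (L : MixedLeaks G) (S : Set V) : MixedLeaks G where
  vertices := {v ∈ L.vertices | v ∈ S}
  edges := {e ∈ L.edges | ∃ x ∈ e, x ∈ S}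
  specified := {p ∈ L.specified | p.1 ∈ S}
  edges_subset _ he := L.edges_subset (Finset.mem_of_mem_filter _ he)
  adj_of_mem_specified p hp := L.adj_of_mem_specified p (Finset.mem_of_mem_filter _ hp)

theorem active_univ (L : MixedLeaks G) : L.active Set.univ = L := by
  have exists_mem (e : Sym2 V) : ∃ x, x ∈ e := ⟨_, e.out_fst_mem⟩
  simp [active, exists_mem]

theorem mem_prohibitedForces_active {L : MixedLeaks G} {S : Set V} {p : V × V}
    (hp : p ∈ L.prohibitedForces) (hpS : p.1 ∈ S) : p ∈ (L.active S).prohibitedForces := by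
  classical
  rcases hp with (hvertex | hedge) | hspecified
  · exact .inl (.inl (Finset.mem_filter.2 ⟨hvertex, hpS⟩))
  · exact .inl (.inr (Finset.mem_filter.2 ⟨hedge, p.1, Sym2.mem_mk_left _ _, hpS⟩))
  · exact .inr (Finset.mem_filter.2 ⟨hspecified, hpS⟩)

theorem closureSet_active_subset (L : MixedLeaks G) :
    closureSet G (L.active (closureSet G L.prohibitedForces B)).prohibitedForces B ⊆
      closureSet G L.prohibitedForces B :=
  closureSet_subset_closureSet fun _ => mem_prohibitedForces_active

end MixedLeaks

theorem IsMixedLeakyForcingSet.closureSet_eq_univ (hB : IsMixedLeakyForcingSet G m B)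
    {L : MixedLeaks G} (hL : L.card ≤ m) : closureSet G L.prohibitedForces B = Set.univ :=
  hB L.vertices L.edges L.specified L.edges_subset L.adj_of_mem_specified hL

theorem IsMixedLeakyForcingSet.lt_card_active (hB : IsMixedLeakyForcingSet G m B)
    {L : MixedLeaks G} (hL : m < L.card) :
    m < (L.active (closureSet G L.prohibitedForces B)).card := by
  by_contra! hactive
  have hC : closureSet G L.prohibitedForces B = Set.univ :=
    Set.eq_univ_of_univ_subset (hB.closureSet_eq_univ hactive ▸ L.closureSet_active_subset)
  rw [hC, L.active_univ] at hactive
  exact hL.not_ge hactive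

theorem MixedLeaks.ncard_inactive_add_card_active (L : MixedLeaks G) (S : Set V) :
    ((L.vertices : Set V) \ S).ncard + {e ∈ (L.edges : Set (Sym2 V)) | ∀ x ∈ e, x ∉ S}.ncard +
      {p ∈ (L.specified : Set (V × V)) | p.1 ∉ S}.ncard + (L.active S).card = L.card := by
  classical
  have hvertices : ((L.vertices : Set V) \ S).ncard + (L.active S).vertices.card =
      L.vertices.card :=
    ncard_sep_not_add_card_filter L.vertices (· ∈ S)
  have hedges : {e ∈ (L.edges : Set (Sym2 V)) | ∀ x ∈ e, x ∉ S}.ncard +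
      (L.active S).edges.card = L.edges.card := by
    simpa only [active, not_exists, not_and] using
      ncard_sep_not_add_card_filter L.edges (∃ x ∈ ·, x ∈ S)
  have hspecified : {p ∈ (L.specified : Set (V × V)) | p.1 ∉ S}.ncard +
      (L.active S).specified.card = L.specified.card :=
    ncard_sep_not_add_card_filter L.specified (·.1 ∈ S)
  unfold card
  omega

theorem statement10_general (hB : IsMixedLeakyForcingSet G m B) (L₁ : Finset V)
    (L₂ : Finset (Sym2 V)) (L₃ : Finset (V × V)) (hL₂ : ↑L₂ ⊆ G.edgeSet)
    (hL₃ : ∀ p ∈ L₃, G.Adj p.1 p.2) (hm : m < L₁.card + L₂.card + L₃.card) (C : Set V)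
    (hC : C = closureSet G (vertexLeaks ↑L₁ ∪ edgeLeaksP ↑L₂ ∪ (↑L₃ : Set (V × V))) B) :
    ((L₁ : Set V) \ C).ncard + {e ∈ (L₂ : Set (Sym2 V)) | ∀ x ∈ e, x ∉ C}.ncard +
        {p ∈ (L₃ : Set (V × V)) | p.1 ∉ C}.ncard + m < L₁.card + L₂.card + L₃.card := by
  let L : MixedLeaks G := ⟨L₁, L₂, L₃, hL₂, hL₃⟩
  have hactive : m < (L.active C).card := hC ▸ hB.lt_card_active (L := L) hm
  exact (Nat.add_lt_add_left hactive _).trans_eq (L.ncard_inactive_add_card_active C)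

end

/-- Lemma `mixfail`: if `B` is a mixed `(ℓ-1)`-leaky forcing
set and `L = L₁ ∪ L₂ ∪ L₃` is a set of `k ≥ ℓ` leaks (`L₁` vertex leaks, `L₂`
edge leaks, `L₃` specified leaks), then
`|L₁ \ B^[∞]_L| + |L₂ - B^[∞]_L| + |L₃ - B^[∞]_L| ≤ k - ℓ`. -/
theorem statement10 [Fintype V] [DecidableEq V] (G : SimpleGraph V) (ℓ k : ℕ)
    (hℓ : 1 ≤ ℓ) (B : Set V) (hB : IsMixedLeakyForcingSet G (ℓ - 1) B)
    (L₁ : Finset V) (L₂ : Finset (Sym2 V)) (L₃ : Finset (V × V))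
    (hL₂ : ↑L₂ ⊆ G.edgeSet) (hL₃ : ∀ p ∈ L₃, G.Adj p.1 p.2)
    (hcard : L₁.card + L₂.card + L₃.card = k) (hk : ℓ ≤ k)
    (C : Set V)
    (hC : C = closureSet G (vertexLeaks ↑L₁ ∪ edgeLeaksP ↑L₂ ∪ (↑L₃ : Set (V × V))) B) :
    ((L₁ : Set V) \ C).ncard +
        {e ∈ (L₂ : Set (Sym2 V)) | ∀ x ∈ e, x ∉ C}.ncard +
        {p ∈ (L₃ : Set (V × V)) | p.1 ∉ C}.ncard ≤ k - ℓ := by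
  have hcount := statement10_general hB L₁ L₂ L₃ hL₂ hL₃ (by omega) C hC
  omega
end
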